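/- If the importance function used in the SEI estimator is the exact subtree-cost function, i.e. r(x) = Cost(T_x) for every node x (assuming Cost(T_x) > 0 for all nodes x), then the SEI estimator is a zero-variance estimator: with probability one, C_SEI(T_v) = Cost(T_v)/|v| for every hypernode v. (Consequence of the paper's Theorem 2 noted after Theorem 3.) -/

import Mathlib

open Finset

/-- A finite rooted tree on a finite node type `V`.  The root is its own parent,
every non-root node has a parent whose depth is one smaller, and the root is the
unique node of depth `0`. -/
structure FinRootedTree (V : Type) [Fintype V] [DecidableEq V] where
  root : V
  parent : V → V
  depth : V → ℕ
  depth_root : depth root = 0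
  parent_root : parent root = root
  depth_parent : ∀ v, v ≠ root → depth (parent v) + 1 = depth v
  eq_root_of_depth_zero : ∀ v, depth v = 0 → v = root

namespace FinRootedTree

variable {V : Type} [Fintype V] [DecidableEq V]

/-- The set of children of a node. -/
def children (T : FinRootedTree V) (x : V) : Finset V :=
  Finset.univ.filter fun w => w ≠ T.root ∧ T.parent w = x

/-- `S(v)`: the set of all children of nodes of a hypernode `v`. -/
def succs (T : FinRootedTree V) (v : Finset V) : Finset V :=
  v.biUnion T.children

/-- The set of nodes of the subtree rooted at `x` (the descendants of `x`,
including `x` itself). -/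
def desc (T : FinRootedTree V) (x : V) : Finset V :=
  Finset.univ.filter fun w =>
    x ∈ (Finset.range (T.depth w + 1)).image fun k => T.parent^[k] w

/-- `Cost(T_x)`: the total cost of the subtree rooted at `x`. -/
noncomputable def subtreeCost (T : FinRootedTree V) (c : V → ℝ) (x : V) : ℝ :=
  ∑ w ∈ T.desc x, c w

/-- `Cost(T_v)`: the total cost of the forest rooted at the hypernode `v`. -/
noncomputable def forestCost (T : FinRootedTree V) (c : V → ℝ) (v : Finset V) : ℝ :=
  ∑ x ∈ v, T.subtreeCost c x

/-- `H(v)`: the hyperchildren of `v` for budget `B`, i.e. the subsets of `S(v)`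
of size `min B |S(v)|`. -/
def hyper (T : FinRootedTree V) (B : ℕ) (v : Finset V) : Finset (Finset V) :=
  (T.succs v).powersetCard (min B (T.succs v).card)

/-- A hypernode: a nonempty set of distinct nodes, all at the same depth. -/
def IsHypernode (T : FinRootedTree V) (v : Finset V) : Prop :=
  v.Nonempty ∧ ∀ a ∈ v, ∀ b ∈ v, T.depth a = T.depth b

/-- Expectation functional of the SEI estimator `C_SEI(T_v)` (with importance
function `r`): `seiE T c B r fuel v g` is `E[g(C_SEI(T_v))]`, defined by the
recursion of Algorithm 2, where the hypernode `w` is drawn from `H(v)` with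
probability `r(w) / (r(S(v)) * C(|S(v)|-1, |w|-1))`, with enough fuel to reach
the leaves. -/
noncomputable def seiE (T : FinRootedTree V) (c : V → ℝ) (B : ℕ)
    (r : V → ℝ) : ℕ → Finset V → (ℝ → ℝ) → ℝ
  | 0, v, g => g ((∑ x ∈ v, c x) / (v.card : ℝ))
  | fuel + 1, v, g =>
      if T.succs v = ∅ then g ((∑ x ∈ v, c x) / (v.card : ℝ))
      else
        ∑ w ∈ T.hyper B v,
          ((∑ a ∈ w, r a) /
              ((∑ a ∈ T.succs v, r a) *
                ((((T.succs v).card - 1).choose (w.card - 1) : ℕ) : ℝ))) *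
            seiE T c B r fuel w fun y =>
              g ((∑ x ∈ v, c x) / (v.card : ℝ) +
                ((w.card : ℝ) / (v.card : ℝ)) *
                  ((∑ a ∈ T.succs v, r a) / (∑ a ∈ w, r a)) * y)

/-- `P(w)`: the probability that the hyperchild `w` is drawn below the hypernode `v`. -/
noncomputable def drawProb (T : FinRootedTree V) (r : V → ℝ) (v w : Finset V) : ℝ :=
  (∑ a ∈ w, r a) /
    ((∑ a ∈ T.succs v, r a) * ((((T.succs v).card - 1).choose (w.card - 1) : ℕ) : ℝ))

/-- The value of `C_SEI(T_v)` when the hyperchild `w` is drawn and `C_SEI(T_w)` takes the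
value `y`. -/
noncomputable def drawValue (T : FinRootedTree V) (c r : V → ℝ) (v w : Finset V) (y : ℝ) : ℝ :=
  (∑ x ∈ v, c x) / (v.card : ℝ) +
    ((w.card : ℝ) / (v.card : ℝ)) * ((∑ a ∈ T.succs v, r a) / (∑ a ∈ w, r a)) * y

theorem sum_powersetCard_sum {α M : Type*} [AddCommMonoid M] (s : Finset α) {k : ℕ} (hk : 1 ≤ k)
    (f : α → M) :
    ∑ w ∈ s.powersetCard k, ∑ a ∈ w, f a = (s.card - 1).choose (k - 1) • ∑ a ∈ s, f a := by
  classical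
  have card_containing (a : α) (ha : a ∈ s) :
      ((s.powersetCard k).filter (a ∈ ·)).card = (s.card - 1).choose (k - 1) := by
    simpa only [singleton_subset_iff, card_singleton] using
      card_filter_powersetCard_subset {a} s k (singleton_subset_iff.2 ha) (by simpa using hk)
  calc ∑ w ∈ s.powersetCard k, ∑ a ∈ w, f a
      = ∑ a ∈ s, ∑ _w ∈ (s.powersetCard k).filter (a ∈ ·), f a :=
        sum_comm' fun w a => by
          simp only [mem_filter, mem_powersetCard]
          exact ⟨fun h => ⟨h, h.1.1 h.2⟩, fun h => h.1⟩
    _ = ∑ a ∈ s, (s.card - 1).choose (k - 1) • f a :=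
        sum_congr rfl fun a ha => by rw [sum_const, card_containing a ha]
    _ = (s.card - 1).choose (k - 1) • ∑ a ∈ s, f a := sum_nsmul ..

section Tree

variable (T : FinRootedTree V) {v : Finset V} {x y : V}

theorem mem_children : y ∈ T.children x ↔ y ≠ T.root ∧ T.parent y = x := by
  simp only [children, mem_filter, mem_univ, true_and]

theorem mem_succs : y ∈ T.succs v ↔ ∃ x ∈ v, y ∈ T.children x := mem_biUnion

theorem depth_of_mem_children (h : y ∈ T.children x) : T.depth y = T.depth x + 1 := by
  obtain ⟨hy, rfl⟩ := T.mem_children.1 h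
  exact (T.depth_parent y hy).symm

theorem depth_iterate_parent (k : ℕ) (x : V) : T.depth (T.parent^[k] x) = T.depth x - k := by
  induction k with
  | zero => rfl
  | succ k ih =>
    rw [Function.iterate_succ_apply']
    by_cases h : T.parent^[k] x = T.root
    · rw [h, T.depth_root] at ih
      rw [h, T.parent_root, T.depth_root]
      lia
    · have := T.depth_parent _ h
      lia

theorem depth_lt_card (x : V) : T.depth x < Fintype.card V := by
  have range_subset : range (T.depth x + 1) ⊆ univ.image T.depth := fun n hn =>
    mem_image.2 ⟨T.parent^[T.depth x - n] x, mem_univ _, by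
      rw [depth_iterate_parent]
      exact Nat.sub_sub_self (mem_range_succ_iff.1 hn)⟩
  calc T.depth x + 1 = (range (T.depth x + 1)).card := (card_range _).symm
    _ ≤ (univ.image T.depth).card := card_le_card range_subset
    _ ≤ Fintype.card V := card_image_le

theorem mem_desc_iff :
    y ∈ T.desc x ↔ T.depth x ≤ T.depth y ∧ T.parent^[T.depth y - T.depth x] y = x := by
  simp only [desc, mem_filter, mem_univ, true_and, mem_image, mem_range_succ_iff]
  constructor
  · rintro ⟨k, hk, rfl⟩
    rw [depth_iterate_parent, Nat.sub_sub_self hk]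
    exact ⟨Nat.sub_le _ _, rfl⟩
  · rintro ⟨-, h⟩
    exact ⟨_, Nat.sub_le _ _, h⟩

theorem desc_eq_insert (x : V) : T.desc x = insert x ((T.children x).biUnion T.desc) := by
  ext y
  simp only [mem_insert, mem_biUnion, mem_desc_iff]
  constructor
  · rintro ⟨hle, hy⟩
    obtain heq | hlt := hle.eq_or_lt
    · left
      simpa only [heq, Nat.sub_self, Function.iterate_zero, id] using hy
    · right
      set z := T.parent^[T.depth y - (T.depth x + 1)] y with hz
      have depth_z : T.depth z = T.depth x + 1 := by rw [hz, depth_iterate_parent]; lia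
      have parent_z : T.parent z = x := by
        rw [hz, ← Function.iterate_succ_apply' T.parent, ← hy]
        congr 2
        lia
      have z_ne_root : z ≠ T.root := fun h => by simp [h, T.depth_root] at depth_z
      exact ⟨z, T.mem_children.2 ⟨z_ne_root, parent_z⟩, by lia, by rw [depth_z]⟩
  · rintro (rfl | ⟨z, hz, hle, hy⟩)
    · simp
    · have depth_z := T.depth_of_mem_children hz
      refine ⟨by lia, ?_⟩
      rw [show T.depth y - T.depth x = (T.depth y - T.depth z) + 1 by lia,
        Function.iterate_succ_apply', hy]
      exact (T.mem_children.1 hz).2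

theorem pairwiseDisjoint_desc (h : ∀ a ∈ v, ∀ b ∈ v, T.depth a = T.depth b) :
    (v : Set V).PairwiseDisjoint T.desc := fun a ha b hb hab =>
  disjoint_left.2 fun y hya hyb => hab <| by
    rw [← (T.mem_desc_iff.1 hya).2, h a ha b hb, (T.mem_desc_iff.1 hyb).2]

theorem pairwiseDisjoint_children (s : Set V) : s.PairwiseDisjoint T.children :=
  fun _ _ _ _ hab => disjoint_left.2 fun _ hya hyb =>
    hab ((T.mem_children.1 hya).2.symm.trans (T.mem_children.1 hyb).2)

theorem subtreeCost_eq_add_sum_children (c : V → ℝ) (x : V) :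
    T.subtreeCost c x = c x + ∑ y ∈ T.children x, T.subtreeCost c y := by
  have x_notMem : x ∉ (T.children x).biUnion T.desc := fun h => by
    obtain ⟨y, hy, hx⟩ := mem_biUnion.1 h
    have := T.depth_of_mem_children hy
    have := (T.mem_desc_iff.1 hx).1
    lia
  have disjoint_desc : (T.children x : Set V).PairwiseDisjoint T.desc :=
    T.pairwiseDisjoint_desc fun a ha b hb => by
      rw [T.depth_of_mem_children ha, T.depth_of_mem_children hb]
  rw [subtreeCost, desc_eq_insert, sum_insert x_notMem, sum_biUnion disjoint_desc]
  rfl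

theorem forestCost_eq_sum_add_forestCost_succs (c : V → ℝ) (v : Finset V) :
    T.forestCost c v = ∑ x ∈ v, c x + T.forestCost c (T.succs v) := by
  rw [forestCost, sum_congr rfl fun x _ => T.subtreeCost_eq_add_sum_children c x,
    sum_add_distrib, forestCost, succs, sum_biUnion (T.pairwiseDisjoint_children v)]

theorem forestCost_of_succs_eq_empty (c : V → ℝ) (hS : T.succs v = ∅) :
    T.forestCost c v = ∑ x ∈ v, c x := by
  rw [forestCost_eq_sum_add_forestCost_succs, hS, forestCost, sum_empty, add_zero]

theorem succs_mono : Monotone T.succs := fun _ _ h => biUnion_subset_biUnion_of_subset_left _ h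

theorem le_depth_of_mem_iterate_succs {n : ℕ} (h : x ∈ T.succs^[n] v) : n ≤ T.depth x := by
  induction n generalizing x with
  | zero => exact Nat.zero_le _
  | succ n ih =>
    rw [Function.iterate_succ_apply', mem_succs] at h
    obtain ⟨p, hp, hx⟩ := h
    rw [T.depth_of_mem_children hx]
    exact Nat.succ_le_succ (ih hp)

theorem iterate_succs_eq_empty {n : ℕ} (hn : Fintype.card V ≤ n) (v : Finset V) :
    T.succs^[n] v = ∅ :=
  eq_empty_of_forall_notMem fun x hx =>
    (T.depth_lt_card x).not_ge (hn.trans (T.le_depth_of_mem_iterate_succs hx))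

end Tree

section Estimator

variable (T : FinRootedTree V) {c r : V → ℝ} {B fuel : ℕ} {v w : Finset V} {g : ℝ → ℝ}

theorem nonempty_of_mem_hyper (hB : 1 ≤ B) (hS : (T.succs v).Nonempty) (hw : w ∈ T.hyper B v) :
    w.Nonempty :=
  card_pos.1 <| (mem_powersetCard.1 hw).2 ▸ lt_min hB hS.card_pos

theorem sum_drawProb_hyper (hB : 1 ≤ B) (hr : ∑ a ∈ T.succs v, r a ≠ 0) :
    ∑ w ∈ T.hyper B v, T.drawProb r v w = 1 := by
  set S := T.succs v
  set k := min B S.card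
  have S_nonempty : S.Nonempty := nonempty_of_sum_ne_zero hr
  have one_le_k : 1 ≤ k := le_min hB S_nonempty.card_pos
  have choose_ne_zero : (((S.card - 1).choose (k - 1) : ℕ) : ℝ) ≠ 0 :=
    Nat.cast_ne_zero.2 (Nat.choose_pos (Nat.sub_le_sub_right (min_le_right _ _) 1)).ne'
  calc ∑ w ∈ T.hyper B v, T.drawProb r v w
      = ∑ w ∈ S.powersetCard k,
          (∑ a ∈ w, r a) / ((∑ a ∈ S, r a) * ((S.card - 1).choose (k - 1) : ℕ)) :=
        sum_congr rfl fun w hw => by rw [drawProb, (mem_powersetCard.1 hw).2]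
    _ = 1 := by
        rw [← sum_div, sum_powersetCard_sum S one_le_k, nsmul_eq_mul, mul_comm]
        exact div_self (mul_ne_zero hr choose_ne_zero)

theorem seiE_of_succs_eq_empty (hS : T.succs v = ∅) :
    T.seiE c B r fuel v g = g ((∑ x ∈ v, c x) / (v.card : ℝ)) := by
  cases fuel with
  | zero => rfl
  | succ _ => rw [seiE, if_pos hS]

theorem seiE_succ_of_nonempty_succs (hS : (T.succs v).Nonempty) :
    T.seiE c B r (fuel + 1) v g = ∑ w ∈ T.hyper B v,
      T.drawProb r v w * T.seiE c B r fuel w fun y => g (T.drawValue c r v w y) := by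
  rw [seiE, if_neg hS.ne_empty]
  rfl

-- The right-hand side does not depend on `w`: this is the source of the zero variance.
theorem drawValue_subtreeCost (hw : w.Nonempty) (hcost : T.forestCost c w ≠ 0) :
    T.drawValue c (T.subtreeCost c) v w (T.forestCost c w / (w.card : ℝ)) =
      T.forestCost c v / (v.card : ℝ) := by
  have card_ne_zero : (w.card : ℝ) ≠ 0 := Nat.cast_ne_zero.2 hw.card_ne_zero
  have cancel : (w.card : ℝ) / v.card * (T.forestCost c (T.succs v) / T.forestCost c w) *
      (T.forestCost c w / w.card) = T.forestCost c (T.succs v) / v.card := by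
    field_simp
  rw [T.forestCost_eq_sum_add_forestCost_succs c v, add_div, ← cancel]
  rfl

/-- `T.succs^[fuel + 1] v = ∅` says that the forest below `v` has at most `fuel + 1` levels, so
that the recursion reaches the leaves before the fuel runs out. -/
theorem sei_zero_variance_general (hpos : ∀ x, 0 < T.subtreeCost c x) (hB : 1 ≤ B)
    (hv : v.Nonempty) (hfuel : T.succs^[fuel + 1] v = ∅) :
    T.seiE c B (T.subtreeCost c) fuel v g = g (T.forestCost c v / (v.card : ℝ)) := by
  have forestCost_ne_zero {u : Finset V} (hu : u.Nonempty) : T.forestCost c u ≠ 0 :=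
    (sum_pos (fun x _ => hpos x) hu).ne'
  induction fuel generalizing v g with
  | zero =>
    rw [T.seiE_of_succs_eq_empty hfuel, T.forestCost_of_succs_eq_empty c hfuel]
  | succ n ih =>
    obtain hS | hS := (T.succs v).eq_empty_or_nonempty
    · rw [T.seiE_of_succs_eq_empty hS, T.forestCost_of_succs_eq_empty c hS]
    have seiE_hyper (w : Finset V) (hw : w ∈ T.hyper B v) (f : ℝ → ℝ) :
        T.seiE c B (T.subtreeCost c) n w f = f (T.forestCost c w / (w.card : ℝ)) :=
      ih (T.nonempty_of_mem_hyper hB hS hw)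
        (subset_empty.1 (hfuel ▸ T.succs_mono.iterate (n + 1) (mem_powersetCard.1 hw).1))
    calc T.seiE c B (T.subtreeCost c) (n + 1) v g
        = ∑ w ∈ T.hyper B v,
            T.drawProb (T.subtreeCost c) v w * g (T.forestCost c v / (v.card : ℝ)) := by
          rw [T.seiE_succ_of_nonempty_succs hS]
          refine sum_congr rfl fun w hw => ?_
          have hw_nonempty := T.nonempty_of_mem_hyper hB hS hw
          rw [seiE_hyper w hw,
            T.drawValue_subtreeCost hw_nonempty (forestCost_ne_zero hw_nonempty)]
      _ = g (T.forestCost c v / (v.card : ℝ)) := by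
          rw [← sum_mul, T.sum_drawProb_hyper hB (forestCost_ne_zero hS), one_mul]

end Estimator

/-- If the importance function is the exact subtree-cost function
`r(x) = Cost(T_x)` (all subtree costs positive), then the SEI estimator is a
zero-variance estimator: with probability one `C_SEI(T_v) = Cost(T_v)/|v|`
(i.e. the distribution of `C_SEI(T_v)` is the point mass at `Cost(T_v)/|v|`,
so `E[g(C_SEI(T_v))] = g(Cost(T_v)/|v|)` for every `g`). -/
theorem sei_zero_variance (T : FinRootedTree V) (c : V → ℝ) (hc : ∀ x, 0 ≤ c x)
    (hpos : ∀ x : V, 0 < T.subtreeCost c x)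
    (B : ℕ) (hB : 1 ≤ B) (r : V → ℝ)
    (hrc : ∀ x : V, r x = T.subtreeCost c x)
    (v : Finset V) (hv : T.IsHypernode v) (g : ℝ → ℝ) :
    seiE T c B r (Fintype.card V) v g = g (T.forestCost c v / (v.card : ℝ)) := by
  obtain rfl : r = T.subtreeCost c := funext hrc
  exact T.sei_zero_variance_general hpos hB hv.1 (T.iterate_succs_eq_empty (Nat.le_succ _) v)

end FinRootedTree
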